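/- arXiv:1010.5077 — 4 statements merged into one kernel-verified Lean document; each statement's English description precedes it below -/
import Mathlib

section
/- Let g ∈ Γ be an element admitting a reduced expression whose first (leftmost) letter lies in Γ₂ ∖ Σ. Then g Γ₁ g⁻¹ ∩ Γ₁ ⊆ Σ; that is, for every x ∈ Γ₁, if g x g⁻¹ ∈ Γ₁ then g x g⁻¹ ∈ Σ. -/
universe u

/-- The two-element family of groups consisting of `Γ₁` (at index `true`) and `Γ₂`
(at index `false`). -/
def Fam (Γ₁ Γ₂ : Type u) : Bool → Type u := fun b => Bool.rec Γ₂ Γ₁ b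

instance famGroup {Γ₁ Γ₂ : Type u} [Group Γ₁] [Group Γ₂] : ∀ b, Group (Fam Γ₁ Γ₂ b) :=
  fun b => Bool.rec (motive := fun b => Group (Fam Γ₁ Γ₂ b)) ‹Group Γ₂› ‹Group Γ₁› b

/-- The family consisting of the two homomorphisms `ι₁ : Σ → Γ₁` and `ι₂ : Σ → Γ₂`;
the amalgamated free product `Γ = Γ₁ *_Σ Γ₂` is the pushout `Monoid.PushoutI (famHom ι₁ ι₂)`. -/
def famHom {S Γ₁ Γ₂ : Type u} [Group S] [Group Γ₁] [Group Γ₂]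
    (ι₁ : S →* Γ₁) (ι₂ : S →* Γ₂) : ∀ b, S →* Fam Γ₁ Γ₂ b :=
  fun b => Bool.rec (motive := fun b => S →* Fam Γ₁ Γ₂ b) ι₂ ι₁ b

/-- `IsReducedExpr A B S g w` expresses that the list `w` is a reduced expression for `g`
with respect to the subgroups `A` (the image of `Γ₁`), `B` (the image of `Γ₂`) and
`S` (the image of `Σ`): the product of `w` is `g`, every letter of `w` lies in
`(A \ S) ∪ (B \ S)`, and consecutive letters lie in different factors. -/
def IsReducedExpr {Γ : Type*} [Group Γ] (A B S : Subgroup Γ) (g : Γ) (w : List Γ) : Prop :=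
  w.prod = g ∧
  (∀ x ∈ w, (x ∈ A ∧ x ∉ S) ∨ (x ∈ B ∧ x ∉ S)) ∧
  w.Chain' (fun x y => ¬(x ∈ A ∧ y ∈ A) ∧ ¬(x ∈ B ∧ y ∈ B))

section Aux
open Monoid Monoid.PushoutI Monoid.CoprodI

variable {ι : Type*} {G : ι → Type*} {H : Type*} [∀ i, Group (G i)] [Group H]
  (φ : ∀ i, H →* G i)

def RW (i j : ι) (u : PushoutI φ) : Prop :=
  ∃ v : NeWord G i j, (∀ x ∈ v.toList, x.2 ∉ (φ x.1).range) ∧ ofCoprodI v.prod = u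

variable {φ}

theorem RW.single {i : ι} {u : PushoutI φ} (h : u ∈ (of (φ := φ) i).range)
    (hu : u ∉ (base φ).range) : RW φ i i u := by
  obtain ⟨g, rfl⟩ := h
  have hg : g ≠ 1 := by
    rintro rfl
    exact hu (by rw [map_one]; exact one_mem _)
  refine ⟨NeWord.singleton g hg, ?_, by simp⟩
  intro x hx
  simp only [NeWord.toList, List.mem_singleton] at hx
  subst hx
  rintro ⟨y, hy⟩
  exact hu ⟨y, by rw [← of_apply_eq_base φ i y, hy]⟩

theorem RW.append {i j k l : ι} {u u' : PushoutI φ} (h : RW φ i j u) (hjk : j ≠ k)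
    (h' : RW φ k l u') : RW φ i l (u * u') := by
  obtain ⟨v, hv, rfl⟩ := h
  obtain ⟨v', hv', rfl⟩ := h'
  refine ⟨NeWord.append v hjk v', ?_, by simp⟩
  intro x hx
  simp only [NeWord.toList, List.mem_append] at hx
  rcases hx with hx | hx
  · exact hv x hx
  · exact hv' x hx

theorem RW.not_mem (hφ : ∀ i, Function.Injective (φ i)) {i j : ι} {u : PushoutI φ}
    (h : RW φ i j u) : u ∉ (base φ).range := by
  obtain ⟨v, hv, rfl⟩ := h
  intro hb
  have := Reduced.eq_empty_of_mem_range hφ (w := v.toWord) hv hb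
  exact v.toList_ne_nil (congrArg Word.toList this)

theorem base_le (i : ι) : (base φ).range ≤ (of (φ := φ) i).range := by
  rintro _ ⟨h, rfl⟩
  exact ⟨φ i h, of_apply_eq_base φ i h⟩

theorem conj_RW {c : ι} {z : PushoutI φ} (hz : z ∈ (of (φ := φ) c).range)
    (w : List (PushoutI φ))
    (hw : ∀ x ∈ w, (∃ i, x ∈ (of (φ := φ) i).range) ∧ x ∉ (base φ).range)
    (hc : w.IsChain (fun x y => ∀ i, ¬ (x ∈ (of (φ := φ) i).range ∧ y ∈ (of (φ := φ) i).range))) :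
    ∀ a t, w = a :: t → ∀ i, a ∈ (of (φ := φ) i).range →
      w.prod * z * w.prod⁻¹ ∈ (base φ).range ∨ RW φ i i (w.prod * z * w.prod⁻¹) := by
  have key : ∀ (a : PushoutI φ) (i k : ι) (u : PushoutI φ), a ∈ (of (φ := φ) i).range →
      a ∉ (base φ).range → (u ∈ (base φ).range ∨ (u ∈ (of (φ := φ) i).range) ∨
        (i ≠ k ∧ RW φ k k u)) →
      a * u * a⁻¹ ∈ (base φ).range ∨ RW φ i i (a * u * a⁻¹) := by
    intro a i k u ha hab hu
    have fin : u ∈ (of (φ := φ) i).range →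
        a * u * a⁻¹ ∈ (base φ).range ∨ RW φ i i (a * u * a⁻¹) := by
      intro h
      by_cases hb : a * u * a⁻¹ ∈ (base φ).range
      · exact .inl hb
      · exact .inr (RW.single (mul_mem (mul_mem ha h) (inv_mem ha)) hb)
    rcases hu with h | h | ⟨hik, h⟩
    · exact fin (base_le i h)
    · exact fin h
    · right
      exact ((RW.single ha hab).append hik h).append hik.symm
        (RW.single (inv_mem ha) (fun h => hab (by simpa using inv_mem h)))
  induction w with
  | nil => intro a t h; simp at h
  | cons a t ih =>
    rintro a' t' heq i ha
    obtain ⟨rfl, rfl⟩ := List.cons.inj heq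
    have hab := (hw a (by simp)).2
    cases t with
    | nil =>
      simp only [List.prod_cons, List.prod_nil, mul_one]
      by_cases hzi : z ∈ (of (φ := φ) i).range
      · exact key a i i z ha hab (.inr (.inl hzi))
      · refine key a i c z ha hab (.inr (.inr ⟨?_, RW.single hz fun h => hzi (base_le i h)⟩))
        rintro rfl
        exact hzi hz
    | cons b t =>
      obtain ⟨k, hk⟩ := (hw b (by simp)).1
      rw [List.isChain_cons_cons] at hc
      have hik : i ≠ k := by
        rintro rfl
        exact hc.1 i ⟨ha, hk⟩
      have := ih (fun x hx => hw x (List.mem_cons_of_mem _ hx)) hc.2 b t rfl k hk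
      have h2 := key a i k ((b :: t).prod * z * (b :: t).prod⁻¹) ha hab
        (this.imp id fun h => .inr ⟨hik, h⟩)
      have e : (a :: b :: t).prod * z * (a :: b :: t).prod⁻¹ =
          a * ((b :: t).prod * z * (b :: t).prod⁻¹) * a⁻¹ := by
        rw [List.prod_cons (a := a)]; group
      rw [e]; exact h2

end Aux

/-- If `g ∈ Γ = Γ₁ *_Σ Γ₂` admits a reduced expression whose first letter
lies in `Γ₂ ∖ Σ`, then `g Γ₁ g⁻¹ ∩ Γ₁ ⊆ Σ`. -/
theorem stmt0 {S Γ₁ Γ₂ : Type u} [Group S] [Group Γ₁] [Group Γ₂]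
    (ι₁ : S →* Γ₁) (ι₂ : S →* Γ₂)
    (hι₁ : Function.Injective ι₁) (hι₂ : Function.Injective ι₂)
    (φ₁ : Γ₁ →* Monoid.PushoutI (famHom ι₁ ι₂))
    (φ₂ : Γ₂ →* Monoid.PushoutI (famHom ι₁ ι₂))
    (hφ₁ : φ₁ = Monoid.PushoutI.of (φ := famHom ι₁ ι₂) true)
    (hφ₂ : φ₂ = Monoid.PushoutI.of (φ := famHom ι₁ ι₂) false)
    (g : Monoid.PushoutI (famHom ι₁ ι₂)) (w : List (Monoid.PushoutI (famHom ι₁ ι₂)))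
    (hred : IsReducedExpr φ₁.range φ₂.range (φ₁.comp ι₁).range g w)
    (hhead : ∃ x, w.head? = some x ∧ x ∈ φ₂.range ∧ x ∉ (φ₁.comp ι₁).range) :
    ∀ x ∈ φ₁.range, g * x * g⁻¹ ∈ φ₁.range → g * x * g⁻¹ ∈ (φ₁.comp ι₁).range := by
  have hφ : ∀ b, Function.Injective (famHom ι₁ ι₂ b) := by
    rintro (_ | _)
    · exact hι₂
    · exact hι₁
  have hb : (φ₁.comp ι₁).range = (Monoid.PushoutI.base (famHom ι₁ ι₂)).range := by
    rw [hφ₁, ← Monoid.PushoutI.of_comp_eq_base (φ := famHom ι₁ ι₂) true]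
    rfl
  rw [hb] at hred hhead ⊢
  subst hφ₁ hφ₂
  obtain ⟨rfl, hl, hc⟩ := hred
  obtain ⟨a, ha, haB, haS⟩ := hhead
  intro x hx hy
  by_contra hyS
  obtain ⟨t, rfl⟩ : ∃ t, w = a :: t := by
    cases w with
    | nil => simp at ha
    | cons b t => simp at ha; exact ⟨t, by rw [ha]⟩
  have := conj_RW (φ := famHom ι₁ ι₂) (c := true) hx (a :: t)
    (fun y hy => (hl y hy).elim (fun h => ⟨⟨true, h.1⟩, h.2⟩) (fun h => ⟨⟨false, h.1⟩, h.2⟩))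
    (List.IsChain.imp (fun p q h i => by
      cases i
      · exact h.2
      · exact h.1) hc) a t rfl false haB
  rcases this with h | h
  · exact hyS h
  · have hs : RW (famHom ι₁ ι₂) true true ((a :: t).prod * x * (a :: t).prod⁻¹)⁻¹ :=
      RW.single (inv_mem hy) (fun h => hyS (by simpa using inv_mem h))
    refine (hs.append (by decide) h).not_mem hφ ?_
    rw [inv_mul_cancel]
    exact one_mem _
end

section
/- The images of Γ₁ and Γ₂ in the amalgamated free product Γ intersect exactly in the image of Σ: φ₁(Γ₁) ∩ φ₂(Γ₂) = φ₁(ι₁(Σ)) (equivalently = φ₂(ι₂(Σ))) as subgroups of Γ. -/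
universe u

/-- In the amalgamated free product `Γ = Γ₁ *_Σ Γ₂`, the images of `Γ₁`
and `Γ₂` intersect exactly in the image of `Σ`:
`φ₁(Γ₁) ∩ φ₂(Γ₂) = φ₁(ι₁(Σ)) = φ₂(ι₂(Σ))`. -/
theorem stmt2 {S Γ₁ Γ₂ : Type u} [Group S] [Group Γ₁] [Group Γ₂]
    (ι₁ : S →* Γ₁) (ι₂ : S →* Γ₂)
    (hι₁ : Function.Injective ι₁) (hι₂ : Function.Injective ι₂)
    (φ₁ : Γ₁ →* Monoid.PushoutI (famHom ι₁ ι₂))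
    (φ₂ : Γ₂ →* Monoid.PushoutI (famHom ι₁ ι₂))
    (hφ₁ : φ₁ = Monoid.PushoutI.of (φ := famHom ι₁ ι₂) true)
    (hφ₂ : φ₂ = Monoid.PushoutI.of (φ := famHom ι₁ ι₂) false) :
    φ₁.range ⊓ φ₂.range = (φ₁.comp ι₁).range ∧
    φ₁.range ⊓ φ₂.range = (φ₂.comp ι₂).range := by
  subst hφ₁ hφ₂
  have hinj : ∀ b, Function.Injective (famHom ι₁ ι₂ b) := by
    intro b
    cases b
    · exact hι₂
    · exact hι₁
  have h := Monoid.PushoutI.inf_of_range_eq_base_range (φ := famHom ι₁ ι₂) hinj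
    (i := true) (j := false) (by decide)
  have h1 := Monoid.PushoutI.of_comp_eq_base (φ := famHom ι₁ ι₂) true
  have h2 := Monoid.PushoutI.of_comp_eq_base (φ := famHom ι₁ ι₂) false
  exact ⟨h.trans (congrArg MonoidHom.range h1.symm), h.trans (congrArg MonoidHom.range h2.symm)⟩
end

section
/- In the HNN extension Γ = HNN(H, Σ, θ) with stable letter t, one has t⁻¹ H t ∩ H = Σ, and for every integer n ≥ 1, t⁻ⁿ H tⁿ ∩ H ⊆ Σ (all groups being identified with their images in Γ). -/
theorem stmt3_aux {G : Type*} [Group G] {A B : Subgroup G} {φ : A ≃* B} (n : ℕ) (g h : G)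
    (e : (HNNExtension.t⁻¹ ^ (n + 1) * HNNExtension.of h : HNNExtension G A B φ)
      = HNNExtension.of g * HNNExtension.t⁻¹ ^ (n + 1)) : g ∈ A := by
  let w₁ : HNNExtension.NormalWord.ReducedWord G A B :=
    { head := g
      toList := List.replicate (n + 1) (-1, 1)
      chain := by
        apply List.Pairwise.isChain
        rw [List.pairwise_iff_forall_sublist]
        intro a b hab _
        have ha := List.eq_of_mem_replicate (hab.subset (by simp : a ∈ [a, b]))
        have hb := List.eq_of_mem_replicate (hab.subset (by simp : b ∈ [a, b]))
        rw [ha, hb] }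
  let w₂ : HNNExtension.NormalWord.ReducedWord G A B :=
    { head := 1
      toList := List.replicate n (-1, 1) ++ [(-1, h)]
      chain := by
        apply List.Pairwise.isChain
        rw [List.pairwise_iff_forall_sublist]
        intro a b hab _
        have key : ∀ c ∈ (List.replicate n ((-1 : ℤˣ), (1 : G)) ++ [(-1, h)]), c.1 = -1 := by
          intro c hc
          rw [List.mem_append] at hc
          rcases hc with hc | hc
          · rw [List.eq_of_mem_replicate hc]
          · rw [List.mem_singleton.1 hc]
        rw [key a (hab.subset (by simp)), key b (hab.subset (by simp))] }
  have hp : w₁.prod φ = w₂.prod φ := by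
    have e' := e.symm
    simp only [pow_succ, mul_assoc, inv_pow] at e'
    simp [w₁, w₂, HNNExtension.NormalWord.ReducedWord.prod, pow_succ, mul_assoc, e']
  have := (HNNExtension.ReducedWord.map_fst_eq_and_of_prod_eq φ hp).2 (-1)
    (by simp [w₁, List.replicate_succ])
  simpa [w₁, w₂] using this

/-- In the HNN extension `Γ = HNN(H, Σ, θ)` with stable letter `t`
(so that `t σ t⁻¹ = θ(σ)` for all `σ ∈ Σ`), one has `t⁻¹ H t ∩ H = Σ`, and for every
`n ≥ 1`, `t⁻ⁿ H tⁿ ∩ H ⊆ Σ` (all groups identified with their images in `Γ`). -/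
theorem stmt3 {H : Type*} [Group H] (S : Subgroup H) (θ : S →* H)
    (hθ : Function.Injective θ)
    (of : H →* HNNExtension H S θ.range (MonoidHom.ofInjective hθ))
    (t : HNNExtension H S θ.range (MonoidHom.ofInjective hθ))
    (hof : of = HNNExtension.of) (ht : t = HNNExtension.t) :
    (Subgroup.map (MulAut.conj t⁻¹).toMonoidHom of.range ⊓ of.range = S.map of) ∧
    (∀ n : ℕ, 1 ≤ n →
      Subgroup.map (MulAut.conj (t⁻¹ ^ n)).toMonoidHom of.range ⊓ of.range ≤ S.map of) := by
  have main : ∀ n : ℕ, 1 ≤ n →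
      Subgroup.map (MulAut.conj (t⁻¹ ^ n)).toMonoidHom of.range ⊓ of.range ≤ S.map of := by
    subst hof ht
    intro n hn
    obtain ⟨n, rfl⟩ := Nat.exists_eq_add_of_le' hn
    rintro _ ⟨⟨_, ⟨h, rfl⟩, hx⟩, ⟨g, rfl⟩⟩
    refine ⟨g, stmt3_aux (φ := MonoidHom.ofInjective hθ) n g h ?_, rfl⟩
    rw [← hx]
    rw [MulEquiv.coe_toMonoidHom, MulAut.conj_apply, inv_mul_cancel_right]
  refine ⟨le_antisymm (by simpa using main 1 le_rfl) ?_, main⟩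
  subst hof ht
  rintro _ ⟨s, hs, rfl⟩
  refine ⟨⟨_, ⟨θ ⟨s, hs⟩, rfl⟩, ?_⟩, ⟨s, rfl⟩⟩
  have := HNNExtension.equiv_eq_conj (φ := MonoidHom.ofInjective hθ) ⟨s, hs⟩
  rw [MonoidHom.ofInjective_apply] at this
  rw [this]
  simp [MulAut.conj_apply, mul_assoc]
end

section
/- The group Γ = SL(3,ℤ) *_Σ SL(3,ℤ) is an ICC group: for every g ∈ Γ with g ≠ e, the conjugacy class { h g h⁻¹ : h ∈ Γ } is infinite. -/
universe u

open Matrix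

/-- `Σ < SL(3,ℤ)`: the subgroup of matrices `g` with `g₃₁ = g₃₂ = 0`
(third row, first and second columns). -/
def Sigma3 : Subgroup (Matrix.SpecialLinearGroup (Fin 3) ℤ) where
  carrier := {g | g.1 2 0 = 0 ∧ g.1 2 1 = 0}
  one_mem' := by simp
  mul_mem' := by
    rintro a b ⟨ha0, ha1⟩ ⟨hb0, hb1⟩
    constructor <;>
      simp [Matrix.SpecialLinearGroup.coe_mul, Matrix.mul_apply, Fin.sum_univ_three,
        ha0, ha1, hb0, hb1]
  inv_mem' := by
    rintro a ⟨ha0, ha1⟩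
    constructor <;>
      simp [Matrix.SpecialLinearGroup.coe_inv, Matrix.adjugate_fin_three, ha0, ha1]

/-- `P ≤ Σ`: the subgroup of matrices `[[1,0,x],[0,1,y],[0,0,1]]` with `x, y ∈ ℤ`. -/
def P3 : Subgroup (Matrix.SpecialLinearGroup (Fin 3) ℤ) where
  carrier := {g | ∃ x y : ℤ, g.1 = !![1, 0, x; 0, 1, y; 0, 0, 1]}
  one_mem' := ⟨0, 0, by
    ext i j
    fin_cases i <;> fin_cases j <;>
      simp [Matrix.vecHead, Matrix.vecTail]⟩
  mul_mem' := by
    rintro a b ⟨x, y, ha⟩ ⟨x', y', hb⟩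
    refine ⟨x + x', y + y', ?_⟩
    have : a.1 * b.1 = !![1, 0, x + x'; 0, 1, y + y'; 0, 0, 1] := by
      rw [ha, hb]
      ext i j
      fin_cases i <;> fin_cases j <;>
        simp [Matrix.mul_apply, Fin.sum_univ_three, Matrix.vecHead, Matrix.vecTail, add_comm]
    simpa using this
  inv_mem' := by
    rintro a ⟨x, y, ha⟩
    refine ⟨-x, -y, ?_⟩
    rw [Matrix.SpecialLinearGroup.coe_inv, ha]
    ext i j
    fin_cases i <;> fin_cases j <;>
      simp [Matrix.adjugate_fin_three, Matrix.vecHead, Matrix.vecTail]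


namespace ICCAux

open Monoid Monoid.PushoutI

section gen

variable {G : Bool → Type*} {H : Type*} [∀ i, Group (G i)] [Group H] {φ : ∀ i, H →* G i}

def Red (φ : ∀ i, H →* G i) (l : List (Σ i, G i)) : Prop :=
  (∀ g ∈ l, g.2 ∉ (φ g.1).range) ∧ l.IsChain (fun a b => a.1 ≠ b.1)

def pr (φ : ∀ i, H →* G i) (l : List (Σ i, G i)) : PushoutI φ :=
  (l.map (fun x => of (φ := φ) x.1 x.2)).prod

def Red.toWord {l : List (Σ i, G i)} (h : Red φ l) : CoprodI.Word G where
  toList := l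
  ne_one := fun x hx h1 => h.1 x hx (h1 ▸ one_mem _)
  chain_ne := h.2

lemma pr_eq (w : CoprodI.Word G) : ofCoprodI w.prod = pr φ w.toList := by
  simp only [CoprodI.Word.prod, pr, map_list_prod, List.map_map]
  congr 1

lemma Red.length_eq (hφ : ∀ i, Function.Injective (φ i)) {l l' : List (Σ i, G i)}
    (h : Red φ l) (h' : Red φ l') (e : pr φ l = pr φ l') : l.length = l'.length := by
  obtain ⟨d⟩ := NormalWord.transversal_nonempty φ hφ
  obtain ⟨w, hw, hm⟩ := Reduced.exists_normalWord_prod_eq d (w := h.toWord) (φ := φ) h.1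
  obtain ⟨w', hw', hm'⟩ := Reduced.exists_normalWord_prod_eq d (w := h'.toWord) (φ := φ) h'.1
  rw [pr_eq] at hw hw'
  have : w = w' := NormalWord.prod_injective (by rw [hw, hw']; exact e)
  subst this
  rw [hm] at hm'
  have := congrArg List.length hm'
  rw [List.length_map, List.length_map] at this
  exact this

lemma exists_red (hφ : ∀ i, Function.Injective (φ i)) (g : PushoutI φ) :
    g ∈ (base φ).range ∨ ∃ l, Red φ l ∧ l ≠ [] ∧ pr φ l = g := by
  classical
  obtain ⟨d⟩ := NormalWord.transversal_nonempty φ hφ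
  obtain ⟨w, rfl⟩ := (NormalWord.equiv (d := d)).symm.surjective g
  change w.prod ∈ _ ∨ ∃ l, Red φ l ∧ l ≠ [] ∧ pr φ l = w.prod
  have hr : Red φ w.toList := by
    refine ⟨?_, w.chain_ne⟩
    rintro ⟨i, x⟩ hx hxr
    have h1 := w.normalized i x hx
    apply w.ne_one _ hx
    have := (d.compl i).1 (a₁ := (⟨x, hxr⟩, ⟨1, d.one_mem i⟩)) (a₂ := (1, ⟨x, h1⟩)) (by simp)
    simpa using (congrArg (fun p => (p.1 : G i)) this)
  have hp : w.prod = base φ w.head * pr φ w.toList := by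
    rw [← pr_eq]; rfl
  rw [hp]
  generalize w.head = h at *
  generalize w.toList = l at *
  rcases l with _ | ⟨⟨i, x⟩, t⟩
  · left; exact ⟨h, by simp [pr]⟩
  · right
    refine ⟨⟨i, φ i h * x⟩ :: t, ⟨?_, ?_⟩, by simp, ?_⟩
    · intro y hy
      rcases List.mem_cons.1 hy with rfl | hy
      · intro hc
        exact hr.1 ⟨i, x⟩ (by simp) ((Subgroup.mul_mem_cancel_left _ (MonoidHom.mem_range.2 ⟨h, rfl⟩)).1 hc)
      · exact hr.1 y (by simp [hy])
    · have := hr.2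
      rw [List.isChain_cons] at this ⊢
      exact this
    · simp [pr, mul_assoc, of_apply_eq_base]

lemma conj_red (l : List (Σ i, G i)) (hl : Red φ l) (hne : l ≠ []) (i k : Bool) (hik : i ≠ k)
    (h1 : ∀ y ∈ l.head?, y.1 = i) (h2 : ∀ y ∈ l.getLast?, y.1 = i)
    (c : G k) (hc : c ∉ (φ k).range) :
    Red φ (⟨k, c⟩ :: (l ++ [⟨k, c⁻¹⟩])) := by
  refine ⟨?_, ?_⟩
  · intro y hy
    simp only [List.mem_cons, List.mem_append, List.not_mem_nil, or_false] at hy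
    rcases hy with rfl | hy | rfl
    · exact hc
    · exact hl.1 y hy
    · simpa using hc
  · rw [List.isChain_cons]
    constructor
    · intro y hy
      rw [List.head?_append_of_ne_nil _ hne] at hy
      rw [h1 y hy]; exact hik.symm
    · rw [List.isChain_append]
      refine ⟨hl.2, by simp, ?_⟩
      intro x hx y hy
      simp at hy
      subst hy
      rw [h2 x hx]; exact hik

lemma grow (hG : ∀ i, ∃ a : G i, a ∉ (φ i).range) (g : PushoutI φ)
    (l : List (Σ i, G i)) (hl : Red φ l) (hne : l ≠ []) (i : Bool)
    (h1 : ∀ y ∈ l.head?, y.1 = i) (h2 : ∀ y ∈ l.getLast?, y.1 = i)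
    (hc : ∃ h, h * g * h⁻¹ = pr φ l) (n : ℕ) :
    ∃ l' : List (Σ i, G i), Red φ l' ∧ l' ≠ [] ∧ l'.length = l.length + 2 * n ∧
      (∃ i, (∀ y ∈ l'.head?, y.1 = i) ∧ (∀ y ∈ l'.getLast?, y.1 = i)) ∧
      ∃ h, h * g * h⁻¹ = pr φ l' := by
  induction n with
  | zero => exact ⟨l, hl, hne, by simp, ⟨i, h1, h2⟩, hc⟩
  | succ n ih =>
    obtain ⟨l', hr, hn, hlen, ⟨i, h1, h2⟩, h, hh⟩ := ih
    obtain ⟨c, hc⟩ := hG (!i)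
    refine ⟨⟨!i, c⟩ :: (l' ++ [⟨!i, c⁻¹⟩]), conj_red l' hr hn i (!i) (by simp) h1 h2 c hc,
      by simp, by simp; omega, ⟨!i, by simp, ?_⟩, PushoutI.of (!i) c * h, ?_⟩
    · intro y hy
      rw [← List.cons_append, List.getLast?_append] at hy
      simp at hy
      subst hy; rfl
    · have : pr φ (⟨!i, c⟩ :: (l' ++ [⟨!i, c⁻¹⟩])) = PushoutI.of (!i) c * pr φ l' * (PushoutI.of (!i) c)⁻¹ := by
        simp [pr, mul_assoc]
      rw [this, ← hh]; group

lemma inf_of_grow (hφ : ∀ i, Function.Injective (φ i))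
    (hG : ∀ i, ∃ a : G i, a ∉ (φ i).range) (g : PushoutI φ)
    (l : List (Σ i, G i)) (hl : Red φ l) (hne : l ≠ []) (i : Bool)
    (h1 : ∀ y ∈ l.head?, y.1 = i) (h2 : ∀ y ∈ l.getLast?, y.1 = i)
    (hc : ∃ h, h * g * h⁻¹ = pr φ l) : {x | ∃ h, h * g * h⁻¹ = x}.Infinite := by
  choose f hr _ hlen _ hcj using grow hG g l hl hne i h1 h2 hc
  refine Set.infinite_of_injective_forall_mem (f := fun n => pr φ (f n)) ?_ hcj
  intro m n hmn
  have := Red.length_eq hφ (hr m) (hr n) hmn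
  rw [hlen, hlen] at this
  omega

lemma inf_of_not_base (hφ : ∀ i, Function.Injective (φ i))
    (hG : ∀ i, ∃ a b : G i, a ∉ (φ i).range ∧ b ∉ (φ i).range ∧ a * b⁻¹ ∉ (φ i).range)
    (g : PushoutI φ) (hg : g ∉ (base φ).range) : {x | ∃ h, h * g * h⁻¹ = x}.Infinite := by
  have hG' : ∀ i, ∃ a : G i, a ∉ (φ i).range := fun i => by
    obtain ⟨a, _, h, _⟩ := hG i
    exact ⟨a, h⟩
  obtain ⟨l, hl, hne, rfl⟩ := (exists_red hφ g).resolve_left hg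
  obtain ⟨⟨i, x⟩, t, rfl⟩ := List.exists_cons_of_ne_nil hne
  by_cases hlast : ((⟨i, x⟩ :: t : List (Σ i, G i)).getLast hne).1 = i
  · refine inf_of_grow hφ hG' _ _ hl hne i (by simp) ?_ ⟨1, by simp⟩
    intro y hy
    rw [List.getLast?_eq_getLast_of_ne_nil hne] at hy
    simp only [Option.mem_def, Option.some.injEq] at hy
    rw [← hy]; exact hlast
  · have ht : t ≠ [] := by
      rintro rfl
      exact hlast rfl
    obtain ⟨a, ha, hax⟩ : ∃ a : G i, a ∉ (φ i).range ∧ a * x ∉ (φ i).range := by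
      obtain ⟨a, b, ha, hb, hab⟩ := hG i
      by_cases h : a * x ∈ (φ i).range
      · refine ⟨b, hb, fun h' => hab ?_⟩
        have := mul_mem h (inv_mem h')
        simpa [mul_assoc] using this
      · exact ⟨a, ha, h⟩
    refine inf_of_grow hφ hG' _ (⟨i, a * x⟩ :: (t ++ [⟨i, a⁻¹⟩])) ⟨?_, ?_⟩ (by simp) i (by simp)
      ?_ ⟨of i a, ?_⟩
    · intro y hy
      simp only [List.mem_cons, List.mem_append, List.not_mem_nil, or_false] at hy
      rcases hy with rfl | hy | rfl
      · exact hax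
      · exact hl.1 y (by simp [hy])
      · simpa using ha
    · have h2 := hl.2
      rw [List.isChain_cons] at h2 ⊢
      constructor
      · rw [List.head?_append_of_ne_nil _ ht]
        exact h2.1
      · rw [List.isChain_append]
        refine ⟨h2.2, by simp, ?_⟩
        intro z hz y hy
        simp at hy
        subst hy
        rw [List.getLast?_eq_getLast_of_ne_nil ht] at hz
        simp only [Option.mem_def, Option.some.injEq] at hz
        rw [List.getLast_cons ht, hz] at hlast
        exact hlast
    · intro y hy
      rw [← List.cons_append, List.getLast?_append] at hy
      simp at hy
      subst hy; rfl
    · simp [pr, mul_assoc]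

end gen

abbrev SL3 := Matrix.SpecialLinearGroup (Fin 3) ℤ

def E (x y : ℤ) : SL3 := ⟨!![1, 0, 0; 0, 1, 0; x, y, 1], by simp [Matrix.det_fin_three]⟩
def W1 : SL3 := ⟨!![0, 0, 1; 0, -1, 0; 1, 0, 0], by simp [Matrix.det_fin_three]⟩
def W2 : SL3 := ⟨!![-1, 0, 0; 0, 0, 1; 0, 1, 0], by simp [Matrix.det_fin_three]⟩

lemma E_val (x y : ℤ) : (E x y).1 = !![1, 0, 0; 0, 1, 0; x, y, 1] := rfl
lemma W1_val : W1.1 = !![0, 0, 1; 0, -1, 0; 1, 0, 0] := rfl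
lemma W2_val : W2.1 = !![-1, 0, 0; 0, 0, 1; 0, 1, 0] := rfl

lemma mem_sigma (g : SL3) : g ∈ Sigma3 ↔ g.1 2 0 = 0 ∧ g.1 2 1 = 0 := Iff.rfl

lemma E_not_mem (x : ℤ) (hx : x ≠ 0) : E x 0 ∉ Sigma3 := by
  rw [mem_sigma, E_val]; simp [hx]

lemma E_mul : E 1 0 * (E 2 0)⁻¹ ∉ Sigma3 := by
  simp [mem_sigma, E_val, Matrix.SpecialLinearGroup.coe_mul, Matrix.SpecialLinearGroup.coe_inv,
    Matrix.mul_apply, Fin.sum_univ_three, Matrix.adjugate_fin_three]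

lemma core (s : SL3) (h : ∀ x : SL3, x * s * x⁻¹ ∈ Sigma3) : s = 1 := by
  have h0 := h 1
  have h1 := h W1
  have h2 := h W2
  have h3 := h (E 1 0)
  have h4 := h (E 0 1)
  have hd := s.2
  rw [Matrix.det_fin_three] at hd
  simp [mem_sigma, E_val, W1_val, W2_val, Matrix.SpecialLinearGroup.coe_mul,
    Matrix.SpecialLinearGroup.coe_inv,
    Matrix.mul_apply, Fin.sum_univ_three, Matrix.adjugate_fin_three, Matrix.vecMul, dotProduct] at h0 h1 h2 h3 h4
  obtain ⟨a, b⟩ := h0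
  obtain ⟨c, d⟩ := h1
  obtain ⟨e, f⟩ := h2
  simp [a, b, c, d, e, f] at h3 h4 hd
  have e1 : s.1 0 0 = s.1 2 2 := by simpa using (by omega : s.1 0 0 = s.1 2 2)
  have e2 : s.1 1 1 = s.1 2 2 := by simpa using (by omega : s.1 1 1 = s.1 2 2)
  have e3 : s.1 2 2 = 1 := by
    rw [e1, e2] at hd
    have hu : IsUnit (s.1 2 2) := IsUnit.of_mul_eq_one _ ((mul_comm _ _).trans hd)
    rcases Int.isUnit_iff.1 hu with h | h
    · exact h
    · rw [h] at hd; norm_num at hd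
  ext i j
  fin_cases i <;> fin_cases j <;> simp [*]

end ICCAux

open Monoid.PushoutI ICCAux in
/-- The amalgamated free product `Γ = SL(3,ℤ) *_Σ SL(3,ℤ)` is an ICC
group: every `g ≠ e` in `Γ` has an infinite conjugacy class. -/
theorem stmt12
    (g : Monoid.PushoutI (famHom Sigma3.subtype Sigma3.subtype)) (hg : g ≠ 1) :
    {x : Monoid.PushoutI (famHom Sigma3.subtype Sigma3.subtype) |
      ∃ h, h * g * h⁻¹ = x}.Infinite := by
  classical
  have hφ : ∀ i, Function.Injective (famHom Sigma3.subtype Sigma3.subtype i) := by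
    rintro (_ | _) <;> exact Sigma3.subtype_injective
  have hG : ∀ i, ∃ a b : Fam SL3 SL3 i,
      a ∉ (famHom Sigma3.subtype Sigma3.subtype i).range ∧
      b ∉ (famHom Sigma3.subtype Sigma3.subtype i).range ∧
      a * b⁻¹ ∉ (famHom Sigma3.subtype Sigma3.subtype i).range := by
    have hr : Sigma3.subtype.range = Sigma3 := Sigma3.range_subtype
    have key : ∃ a b : SL3, a ∉ Sigma3.subtype.range ∧ b ∉ Sigma3.subtype.range ∧
        a * b⁻¹ ∉ Sigma3.subtype.range := by
      rw [hr]
      exact ⟨E 1 0, E 2 0, E_not_mem 1 (by simp), E_not_mem 2 (by simp), E_mul⟩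
    rintro (_ | _) <;> exact key
  by_cases hb : g ∈ (base (famHom Sigma3.subtype Sigma3.subtype)).range
  · obtain ⟨s, rfl⟩ := hb
    have hs : (s : SL3) ≠ 1 := by
      intro h
      apply hg
      have : s = 1 := Subtype.ext h
      rw [this, map_one]
    have : ∃ x : SL3, x * s * x⁻¹ ∉ Sigma3 := by
      by_contra! hh
      exact hs (core _ hh)
    obtain ⟨x, hx⟩ := this
    let ofT : SL3 →* Monoid.PushoutI (famHom Sigma3.subtype Sigma3.subtype) :=
      of (φ := famHom Sigma3.subtype Sigma3.subtype) true
    have hofT : ∀ t : Sigma3, ofT t = base (famHom Sigma3.subtype Sigma3.subtype) t :=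
      fun t => of_apply_eq_base (famHom Sigma3.subtype Sigma3.subtype) true t
    have hinj : Function.Injective ofT := of_injective hφ true
    have hnb : ofT (x * s * x⁻¹) ∉ (base (famHom Sigma3.subtype Sigma3.subtype)).range := by
      rintro ⟨t, ht⟩
      rw [← hofT] at ht
      exact hx (hinj ht ▸ t.2)
    refine (inf_of_not_base hφ hG _ hnb).mono ?_
    rintro y ⟨h, rfl⟩
    refine ⟨h * ofT x, ?_⟩
    rw [← hofT]
    simp [mul_assoc]
  · exact inf_of_not_base hφ hG g hb
end
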